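/- Fix an integer q ≥ 1, a real a_q > 0, reals a_0, a_1, …, a_{q−1}, and a real p₀ > 0, and write W(n) = −a_q n^q + a_{q−1} n^{q−1} + ⋯ + a_1 n + a_0. There exists a constant c̄ > 0, depending only on a_q, a_0, …, a_{q−1}, q and p₀ (and not on p), such that for every real p ≥ p₀: (∑_{n=0}^∞ n^p · exp(W(n))) / (∑_{n=0}^∞ exp(W(n))) ≤ c̄^p · Γ(p+1)^{1/q} · a_q^{−p/q}. Here the denominator is a convergent series with positive terms, hence a positive real number, and the numerator converges. -/

import Mathlib

/-!
The numerator is bounded term by term. The lower-order part of `W` is `o(n ^ q)`, so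
`W n ≤ C - 2 b n ^ q` with `b = a_q / 4`. One factor `exp (-b n ^ q)` absorbs `n ^ p`: the inequality
`x ^ p * exp (-x) ≤ Γ (p + 1)` at `x = q b n ^ q`, raised to the power `1 / q`, reads
`n ^ p * exp (-b n ^ q) ≤ Γ (p + 1) ^ (1 / q) * (q b) ^ (-p / q)`. The other factor is summable.
This gives the claim with a prefactor `M` independent of `p`, which is absorbed in `c ^ p` through
`M ≤ M ^ (p / p₀)`, valid as soon as `1 ≤ M` and `p₀ ≤ p`.
-/

/-- The tail of Euler's integral beyond `x` is at least `x ^ s * exp (-x)`, because `t ^ s ≥ x ^ s`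
there. -/
theorem rpow_mul_exp_neg_le_Gamma {s x : ℝ} (hs : 0 ≤ s) (hx : 0 ≤ x) :
    x ^ s * Real.exp (-x) ≤ Real.Gamma (s + 1) := by
  have hint : MeasureTheory.IntegrableOn (fun t : ℝ => Real.exp (-t) * t ^ s) (Set.Ioi 0) := by
    simpa using Real.GammaIntegral_convergent (s := s + 1) (by linarith)
  have hsub : Set.Ioi x ⊆ Set.Ioi (0 : ℝ) := Set.Ioi_subset_Ioi hx
  have hexp : MeasureTheory.IntegrableOn (fun t : ℝ => Real.exp (-t)) (Set.Ioi x) := by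
    simpa using integrableOn_exp_mul_Ioi (a := -1) (by norm_num) x
  have h1 : x ^ s * Real.exp (-x) = ∫ t in Set.Ioi x, Real.exp (-t) * x ^ s := by
    rw [MeasureTheory.integral_mul_const, integral_exp_neg_Ioi, mul_comm]
  have h2 : Real.Gamma (s + 1) = ∫ t in Set.Ioi (0 : ℝ), Real.exp (-t) * t ^ s := by
    rw [Real.Gamma_eq_integral (by linarith)]
    simp
  rw [h1, h2]
  refine le_trans (MeasureTheory.setIntegral_mono_on (hexp.mul_const _) (hint.mono_set hsub)
    measurableSet_Ioi ?_) (MeasureTheory.setIntegral_mono_set hint ?_ hsub.eventuallyLE)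
  · intro t ht
    have : x ≤ t := le_of_lt ht
    gcongr
  · filter_upwards [MeasureTheory.ae_restrict_mem measurableSet_Ioi] with t ht
    exact mul_nonneg (Real.exp_pos _).le (Real.rpow_nonneg (le_of_lt ht) _)

theorem rpow_mul_exp_neg_pow_le {q : ℕ} (hq : 1 ≤ q) {b p : ℝ} (hb : 0 < b) (hp : 0 < p) (n : ℕ) :
    (n : ℝ) ^ p * Real.exp (-(b * (n : ℝ) ^ q)) ≤
      Real.Gamma (p + 1) ^ (1 / (q : ℝ)) * (q * b) ^ (-p / (q : ℝ)) := by
  have hq0 : (0 : ℝ) < q := by exact_mod_cast hq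
  have hn : (0 : ℝ) ≤ n := n.cast_nonneg
  have hqb : 0 < q * b := by positivity
  have h := rpow_mul_exp_neg_le_Gamma (s := p) (x := q * b * (n : ℝ) ^ q) hp.le (by positivity)
  have h2 := Real.rpow_le_rpow (by positivity) h (by positivity : (0 : ℝ) ≤ 1 / q)
  have h3 : ((q * b * (n : ℝ) ^ q) ^ p * Real.exp (-(q * b * (n : ℝ) ^ q))) ^ (1 / (q : ℝ)) =
      (q * b) ^ (p / (q : ℝ)) * ((n : ℝ) ^ p * Real.exp (-(b * (n : ℝ) ^ q))) := by
    rw [Real.mul_rpow (by positivity) (by positivity), Real.mul_rpow (by positivity) (by positivity),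
      Real.mul_rpow (by positivity) (by positivity), ← Real.rpow_mul (by positivity),
      ← Real.rpow_mul (by positivity), ← Real.rpow_natCast, ← Real.rpow_mul hn, ← Real.exp_mul,
      mul_assoc, mul_one_div]
    congr 3
    · field_simp
    · field_simp
  rw [h3] at h2
  have h4 : (q * b) ^ (-p / (q : ℝ)) * (q * b) ^ (p / (q : ℝ)) = 1 := by
    rw [← Real.rpow_add hqb, neg_div, neg_add_cancel, Real.rpow_zero]
  have h5 := mul_le_mul_of_nonneg_left h2 (Real.rpow_nonneg hqb.le (-p / (q : ℝ)))
  rw [← mul_assoc, h4, one_mul] at h5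
  linarith

theorem summable_exp_neg_pow {q : ℕ} (hq : 1 ≤ q) {b : ℝ} (hb : 0 < b) :
    Summable (fun n : ℕ => Real.exp (-(b * (n : ℝ) ^ q))) := by
  refine Summable.of_nonneg_of_le (fun n => (Real.exp_pos _).le) (fun n => ?_)
    (Real.summable_exp_nat_mul_iff.mpr (neg_neg_of_pos hb))
  have h : (n : ℝ) ≤ (n : ℝ) ^ q := by exact_mod_cast Nat.le_self_pow (by omega) n
  apply Real.exp_le_exp.mpr
  nlinarith

theorem lower_order_le (q : ℕ) (a : ℕ → ℝ) {ε : ℝ} (hε : 0 < ε) :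
    ∃ C : ℝ, ∀ n : ℕ, ∑ k ∈ Finset.range q, a k * (n : ℝ) ^ k ≤ C + ε * (n : ℝ) ^ q := by
  have ho : (fun x : ℝ => ∑ k ∈ Finset.range q, a k * x ^ k) =o[Filter.atTop]
      (fun x : ℝ => x ^ q) :=
    Asymptotics.IsLittleO.fun_sum fun k hk =>
      (Asymptotics.isLittleO_pow_pow_atTop_of_lt (Finset.mem_range.mp hk)).const_mul_left _
  obtain ⟨N, hN⟩ := Filter.eventually_atTop.mp
    (tendsto_natCast_atTop_atTop.eventually (ho.bound hε))
  -- Below `N` the sum takes finitely many values, so the sum of their norms is an upper bound.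
  refine ⟨∑ m ∈ Finset.range N, ‖∑ k ∈ Finset.range q, a k * (m : ℝ) ^ k‖, fun n => ?_⟩
  rcases le_or_gt N n with h | h
  · have h1 := hN n h
    rw [Real.norm_of_nonneg (r := (n : ℝ) ^ q) (by positivity)] at h1
    have h2 : 0 ≤ ∑ m ∈ Finset.range N, ‖∑ k ∈ Finset.range q, a k * (m : ℝ) ^ k‖ := by positivity
    linarith [Real.le_norm_self (∑ k ∈ Finset.range q, a k * (n : ℝ) ^ k)]
  · have h1 := Finset.single_le_sum
      (f := fun m : ℕ => ‖∑ k ∈ Finset.range q, a k * (m : ℝ) ^ k‖)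
      (fun m _ => norm_nonneg _) (Finset.mem_range.mpr h)
    have h2 : 0 ≤ ε * (n : ℝ) ^ q := by positivity
    linarith [Real.le_norm_self (∑ k ∈ Finset.range q, a k * (n : ℝ) ^ k)]


/-- Eq. (B25) of the paper. Fix an integer `q ≥ 1`, a real `a_q > 0`,
reals `a_0, …, a_{q−1}`, and a real `p₀ > 0`; write
`W(n) = −a_q n^q + a_{q−1} n^{q−1} + ⋯ + a_1 n + a_0`. The denominator
`∑_{n=0}^∞ exp(W(n))` is a convergent series with positive terms, hence a positive real
number, and there exists a constant `c̄ > 0`, depending only on the coefficients, `q` and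
`p₀` (and not on `p`), such that for every real `p ≥ p₀` the numerator converges and
`(∑_{n=0}^∞ n^p exp(W(n))) / (∑_{n=0}^∞ exp(W(n))) ≤ c̄^p · Γ(p+1)^{1/q} · a_q^{−p/q}`. -/
theorem moment_ratio_le (q : ℕ) (hq : 1 ≤ q) (aq : ℝ) (haq : 0 < aq)
    (a : ℕ → ℝ) (p₀ : ℝ) (hp₀ : 0 < p₀) :
    Summable (fun n : ℕ =>
      Real.exp (-aq * (n : ℝ) ^ q + ∑ k ∈ Finset.range q, a k * (n : ℝ) ^ k)) ∧
    0 < ∑' n : ℕ,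
        Real.exp (-aq * (n : ℝ) ^ q + ∑ k ∈ Finset.range q, a k * (n : ℝ) ^ k) ∧
    ∃ c : ℝ, 0 < c ∧ ∀ p : ℝ, p₀ ≤ p →
      Summable (fun n : ℕ => (n : ℝ) ^ p *
        Real.exp (-aq * (n : ℝ) ^ q + ∑ k ∈ Finset.range q, a k * (n : ℝ) ^ k)) ∧
      (∑' n : ℕ, (n : ℝ) ^ p *
            Real.exp (-aq * (n : ℝ) ^ q + ∑ k ∈ Finset.range q, a k * (n : ℝ) ^ k)) /
          (∑' n : ℕ,
            Real.exp (-aq * (n : ℝ) ^ q + ∑ k ∈ Finset.range q, a k * (n : ℝ) ^ k)) ≤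
        c ^ p * Real.Gamma (p + 1) ^ (1 / (q : ℝ)) * aq ^ (-p / (q : ℝ)) := by
  set w : ℕ → ℝ := fun n =>
    Real.exp (-aq * (n : ℝ) ^ q + ∑ k ∈ Finset.range q, a k * (n : ℝ) ^ k) with hw
  have hq0 : (0 : ℝ) < q := by exact_mod_cast hq
  obtain ⟨b, hb, rfl⟩ : ∃ b : ℝ, 0 < b ∧ aq = 4 * b := ⟨aq / 4, by positivity, by ring⟩
  obtain ⟨C, hC⟩ := lower_order_le q a (ε := 2 * b) (by positivity)
  have hwpos : ∀ n, 0 < w n := fun n => Real.exp_pos _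
  set E : ℕ → ℝ := fun n => Real.exp (-(b * (n : ℝ) ^ q)) with hE
  have hEpos : ∀ n, 0 < E n := fun n => Real.exp_pos _
  have hEsum : Summable E := summable_exp_neg_pow hq hb
  have hwE : ∀ n, w n ≤ Real.exp C * (E n * E n) := by
    intro n
    simp only [hw, hE, ← Real.exp_add]
    apply Real.exp_le_exp.mpr
    linarith [hC n]
  have hE1 : ∀ n, E n ≤ 1 := fun n =>
    Real.exp_le_one_iff.mpr (neg_nonpos.mpr (by positivity))
  have hwsum : Summable w := by
    refine Summable.of_nonneg_of_le (fun n => (hwpos n).le) (fun n => (hwE n).trans ?_)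
      (hEsum.mul_left (Real.exp C))
    have := mul_le_of_le_one_left (hEpos n).le (hE1 n)
    gcongr
  have hD : 0 < ∑' n, w n := hwsum.tsum_pos (fun n => (hwpos n).le) 0 (hwpos 0)
  refine ⟨hwsum, hD, ?_⟩
  obtain ⟨M, hM1, hM⟩ : ∃ M : ℝ, 1 ≤ M ∧ Real.exp C * (∑' n, E n) / (∑' n, w n) ≤ M :=
    ⟨_, le_max_left _ _, le_max_right _ _⟩
  have hM0 : 0 < M := by linarith
  refine ⟨M ^ (1 / p₀) * ((q : ℝ) / 4) ^ (-1 / (q : ℝ)), by positivity, fun p hp => ?_⟩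
  have hp0 : 0 < p := by linarith
  set G : ℝ := Real.Gamma (p + 1) ^ (1 / (q : ℝ)) with hG
  have hG0 : 0 ≤ G := Real.rpow_nonneg (Real.Gamma_pos_of_pos (by linarith)).le _
  set B : ℝ := G * (q * b) ^ (-p / (q : ℝ)) with hB
  have hB0 : 0 ≤ B := by positivity
  have hterm : ∀ n : ℕ, (n : ℝ) ^ p * w n ≤ Real.exp C * B * E n := by
    intro n
    have h1 : (n : ℝ) ^ p * E n ≤ B := rpow_mul_exp_neg_pow_le hq hb hp0 n
    have hnp : 0 ≤ (n : ℝ) ^ p := by positivity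
    calc (n : ℝ) ^ p * w n ≤ (n : ℝ) ^ p * (Real.exp C * (E n * E n)) := by
          gcongr
          exact hwE n
      _ = Real.exp C * ((n : ℝ) ^ p * E n) * E n := by ring
      _ ≤ Real.exp C * B * E n := by
          have := hEpos n
          gcongr
  have hsum : Summable (fun n : ℕ => (n : ℝ) ^ p * w n) :=
    Summable.of_nonneg_of_le (fun n => mul_nonneg (by positivity) (hwpos n).le) hterm
      (hEsum.mul_left _)
  refine ⟨hsum, ?_⟩
  have hnum : (∑' n : ℕ, (n : ℝ) ^ p * w n) ≤ Real.exp C * B * ∑' n, E n := by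
    rw [← tsum_mul_left]
    exact hsum.tsum_le_tsum hterm (hEsum.mul_left _)
  have hMp : M ≤ M ^ (p / p₀) := by
    have := Real.rpow_le_rpow_of_exponent_le hM1 ((one_le_div hp₀).mpr hp)
    rwa [Real.rpow_one] at this
  have hpow : (M ^ (1 / p₀) * ((q : ℝ) / 4) ^ (-1 / (q : ℝ))) ^ p =
      M ^ (p / p₀) * ((q : ℝ) / 4) ^ (-p / (q : ℝ)) := by
    rw [Real.mul_rpow (by positivity) (by positivity), ← Real.rpow_mul hM0.le,
      ← Real.rpow_mul (by positivity)]
    congr 2 <;> ring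
  have hsplit : ((q : ℝ) * b) ^ (-p / (q : ℝ)) =
      ((q : ℝ) / 4) ^ (-p / (q : ℝ)) * (4 * b) ^ (-p / (q : ℝ)) := by
    rw [← Real.mul_rpow (by positivity) (by positivity)]
    congr 1
    ring
  calc (∑' n : ℕ, (n : ℝ) ^ p * w n) / (∑' n, w n)
      ≤ (Real.exp C * B * ∑' n, E n) / (∑' n, w n) := by gcongr
    _ = B * (Real.exp C * (∑' n, E n) / (∑' n, w n)) := by ring
    _ ≤ B * M ^ (p / p₀) := by
        gcongr
        exact hM.trans hMp
    _ = _ := by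
        rw [hpow, hB, hsplit]
        ring
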